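/- For all nonnegative integers m, n and all real x, y, writing z = x + i y: if m ≥ n then H_{m,n}(z, conj(z)) = (−1)^n n! (x + i y)^{m−n} L_n^{(m−n)}(x² + y²), and if m < n then H_{m,n}(z, conj(z)) = (−1)^m m! (x − i y)^{n−m} L_m^{(n−m)}(x² + y²). -/

import Mathlib

/-!
Already for independent complex `z₁, z₂` one has
`H_{n+a,n}(z₁, z₂) = (-1)^n n! z₁^a L_n^{(a)}(z₁ z₂)` (`hermite2_add_left`), by reversing the order
of summation. The case `m < n` reduces to this one by the symmetry
`H_{m,n}(z₁, z₂) = H_{n,m}(z₂, z₁)` (`hermite2_swap`). On the diagonal `z₂ = conj z₁` the argument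
`z₁ z₂` is `x² + y²`.
-/

open Complex Finset

/-- The holomorphic Hermite polynomial in two variables. -/
noncomputable def hermite2 (m n : ℕ) (z₁ z₂ : ℂ) : ℂ :=
  ∑ k ∈ Finset.range (min m n + 1),
    (m.choose k : ℂ) * (n.choose k : ℂ) * (-1) ^ k * (Nat.factorial k : ℂ) *
      z₁ ^ (m - k) * z₂ ^ (n - k)

/-- The generalized Laguerre polynomial `L_n^{(a)}`, evaluated at a complex argument:
`L_n^{(a)}(x) = ∑_{k=0}^n (-1)^k ((n+a) choose (n-k)) x^k / k!`. -/
noncomputable def laguerre (n a : ℕ) (x : ℂ) : ℂ :=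
  ∑ k ∈ Finset.range (n + 1),
    (-1) ^ k * ((n + a).choose (n - k) : ℂ) * x ^ k / (Nat.factorial k : ℂ)

/-- The identity `H_{n+a,n}(z₁, z₂) = (-1)^n n! z₁^a L_n^{(a)}(z₁ z₂)` for independent `z₁, z₂`.
The substitution `k ↦ n - k` matches the two sums term by term, since
`(n choose k) (n - k)! = n! / k!`. -/
theorem hermite2_add_left (n a : ℕ) (z₁ z₂ : ℂ) :
    hermite2 (n + a) n z₁ z₂ =
      (-1 : ℂ) ^ n * (Nat.factorial n : ℂ) * z₁ ^ a * laguerre n a (z₁ * z₂) := by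
  unfold hermite2 laguerre
  rw [min_eq_right (Nat.le_add_right n a), ← Finset.sum_range_reflect, Finset.mul_sum]
  refine Finset.sum_congr rfl fun k hk => ?_
  have hkn : k ≤ n := Nat.lt_succ_iff.mp (Finset.mem_range.mp hk)
  have e₁ : n + 1 - 1 - k = n - k := by omega
  have e₂ : n + a - (n - k) = a + k := by omega
  have e₃ : n - (n - k) = k := by omega
  rw [e₁, e₂, e₃, Nat.choose_symm hkn]
  have hfac : (n.choose k : ℂ) * (Nat.factorial k : ℂ) * (Nat.factorial (n - k) : ℂ) =
      (Nat.factorial n : ℂ) := by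
    exact_mod_cast Nat.choose_mul_factorial_mul_factorial hkn
  have hk0 : (Nat.factorial k : ℂ) ≠ 0 := by exact_mod_cast Nat.factorial_ne_zero k
  have hsign : (-1 : ℂ) ^ n * (-1) ^ k = (-1) ^ (n - k) := by
    obtain ⟨d, rfl⟩ := Nat.exists_eq_add_of_le hkn
    rw [Nat.add_sub_cancel_left, pow_add, mul_right_comm, ← mul_pow]
    simp
  rw [← hfac, ← hsign, mul_pow, pow_add]
  field_simp

theorem hermite2_swap (m n : ℕ) (z₁ z₂ : ℂ) : hermite2 m n z₁ z₂ = hermite2 n m z₂ z₁ := by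
  unfold hermite2
  rw [min_comm]
  exact Finset.sum_congr rfl fun k _ => by ring

theorem hermite2_diag_laguerre (m n : ℕ) (x y : ℝ) :
    (m ≥ n →
      hermite2 m n ((x : ℂ) + Complex.I * (y : ℂ))
          ((starRingEnd ℂ) ((x : ℂ) + Complex.I * (y : ℂ))) =
        (-1 : ℂ) ^ n * (Nat.factorial n : ℂ) * ((x : ℂ) + Complex.I * (y : ℂ)) ^ (m - n) *
          laguerre n (m - n) (((x ^ 2 + y ^ 2 : ℝ) : ℂ))) ∧
    (m < n →
      hermite2 m n ((x : ℂ) + Complex.I * (y : ℂ))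
          ((starRingEnd ℂ) ((x : ℂ) + Complex.I * (y : ℂ))) =
        (-1 : ℂ) ^ m * (Nat.factorial m : ℂ) * ((x : ℂ) - Complex.I * (y : ℂ)) ^ (n - m) *
          laguerre m (n - m) (((x ^ 2 + y ^ 2 : ℝ) : ℂ))) := by
  have hconj : (starRingEnd ℂ) ((x : ℂ) + Complex.I * (y : ℂ)) = (x : ℂ) - Complex.I * (y : ℂ) := by
    simp [sub_eq_add_neg]
  have hnorm : ((x : ℂ) + Complex.I * (y : ℂ)) * ((x : ℂ) - Complex.I * (y : ℂ)) =
      ((x ^ 2 + y ^ 2 : ℝ) : ℂ) := by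
    push_cast
    linear_combination (-(y : ℂ) ^ 2) * Complex.I_sq
  rw [hconj]
  constructor
  · intro h
    obtain ⟨a, rfl⟩ := Nat.exists_eq_add_of_le h
    rw [hermite2_add_left, hnorm, Nat.add_sub_cancel_left]
  · intro h
    obtain ⟨a, rfl⟩ := Nat.exists_eq_add_of_le h.le
    rw [hermite2_swap, hermite2_add_left, mul_comm _ ((x : ℂ) + _), hnorm,
      Nat.add_sub_cancel_left]
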